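/- (Pure-state version of Theorem 2.) Let d₁, d₂, d₃ ≥ 1 and let {A_μ}, {B_μ}, {C_μ} be finite families of Hermitian matrices on ℂ^{d₁}, ℂ^{d₂}, ℂ^{d₃} respectively, indexed by the same finite set. Suppose F_a, F_b, F_c and F_{ab}, F_{ac}, F_{bc} are real numbers such that for every unit vector φ of the respective single subsystem, Σ_μ Var_φ(A_μ) ≤ F_a, Σ_μ Var_φ(B_μ) ≤ F_b, Σ_μ Var_φ(C_μ) ≤ F_c, and for every unit vector φ of the respective pair of subsystems, Σ_μ Var_φ(A_μ⊗I + I⊗B_μ) ≤ F_{ab}, Σ_μ Var_φ(A_μ⊗I + I⊗C_μ) ≤ F_{ac}, Σ_μ Var_φ(B_μ⊗I + I⊗C_μ) ≤ F_{bc}. Then every unit vector ψ ∈ ℂ^{d₁}⊗ℂ^{d₂}⊗ℂ^{d₃} that factors as a tensor product across some bipartition of the three subsystems satisfies Σ_μ Var_ψ(A_μ⊗I⊗I + I⊗B_μ⊗I + I⊗I⊗C_μ) ≤ F₁ + F₂, where F₁ = max{F_a, F_b, F_c} and F₂ = max{F_{ab}, F_{ac}, F_{bc}}. -/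

import Mathlib

/-!
The variance is additive on product states: if `α` and `β` are unit vectors and `X`, `Y` are
Hermitian, then `Var (α ⊗ β) (X ⊗ 1 + 1 ⊗ Y) = Var α X + Var β Y`, because the cross term
`2 ⟨X⟩ ⟨Y⟩` in the second moment cancels the one in the squared mean (`var_prodVec`).
A unit vector that is a product can be written as a product of unit vectors
(`exists_unit_factors`). For each of the three bipartitions, after reordering the tensor factors
(`var_submatrix`), the collective observable has the form `X ⊗ 1 + 1 ⊗ Y` with `X` acting on one
subsystem and `Y` the collective observable of the other two, so the sum of variances is at most
a single-subsystem bound plus a pair bound (`sum_var_le_of_product`).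
-/


open Matrix Complex
open scoped Matrix Kronecker

/-- Expectation value ⟨ψ, A ψ⟩ (real part) of an observable `A` in the vector state `ψ`. -/
noncomputable def expVal {n : Type*} [Fintype n] (ψ : n → ℂ) (A : Matrix n n ℂ) : ℝ :=
  (star ψ ⬝ᵥ A.mulVec ψ).re

/-- Variance Var_ψ(A) = ⟨ψ, A²ψ⟩ − ⟨ψ, Aψ⟩². -/
noncomputable def Var {n : Type*} [Fintype n] (ψ : n → ℂ) (A : Matrix n n ℂ) : ℝ :=
  expVal ψ (A * A) - (expVal ψ A) ^ 2

/-- A pure tripartite state is biseparable iff it factors as a tensor product across one of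
the bipartitions a|bc, b|ac, ab|c. -/
def PureBiseparable {da db dc : ℕ} (ψ : Fin da × Fin db × Fin dc → ℂ) : Prop :=
  (∃ (α : Fin da → ℂ) (β : Fin db × Fin dc → ℂ), ∀ p, ψ p = α p.1 * β p.2) ∨
  (∃ (β : Fin db → ℂ) (γ : Fin da × Fin dc → ℂ), ∀ p, ψ p = β p.2.1 * γ (p.1, p.2.2)) ∨
  (∃ (α : Fin da × Fin db → ℂ) (γ : Fin dc → ℂ), ∀ p, ψ p = α (p.1, p.2.1) * γ p.2.2)

section Helpers

variable {m n : Type*} [Fintype m] [Fintype n]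

/-- The product vector `α ⊗ β`. -/
def prodVec (α : m → ℂ) (β : n → ℂ) : m × n → ℂ := fun p => α p.1 * β p.2

lemma prodVec_dotProduct_kronecker (α : m → ℂ) (β : n → ℂ) (X : Matrix m m ℂ)
    (Y : Matrix n n ℂ) :
    star (prodVec α β) ⬝ᵥ (X ⊗ₖ Y).mulVec (prodVec α β) =
      (star α ⬝ᵥ X.mulVec α) * (star β ⬝ᵥ Y.mulVec β) := by
  have h : (X ⊗ₖ Y).mulVec (prodVec α β) = prodVec (X.mulVec α) (Y.mulVec β) := by
    ext ⟨i, j⟩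
    simp only [Matrix.mulVec, dotProduct, prodVec, kroneckerMap_apply, Fintype.sum_prod_type,
      Finset.sum_mul_sum]
    exact Finset.sum_congr rfl fun _ _ => Finset.sum_congr rfl fun _ _ => by ring
  rw [h]
  simp only [dotProduct, prodVec, Fintype.sum_prod_type, Finset.sum_mul_sum, Pi.star_apply,
    star_mul']
  exact Finset.sum_congr rfl fun _ _ => Finset.sum_congr rfl fun _ _ => by ring

lemma prodVec_dotProduct_self (α : m → ℂ) (β : n → ℂ) :
    star (prodVec α β) ⬝ᵥ prodVec α β = (star α ⬝ᵥ α) * (star β ⬝ᵥ β) := by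
  classical
  have h := prodVec_dotProduct_kronecker α β 1 1
  simpa using h

lemma expVal_add (ψ : n → ℂ) (X Y : Matrix n n ℂ) :
    expVal ψ (X + Y) = expVal ψ X + expVal ψ Y := by
  simp [expVal, Matrix.add_mulVec]

/-- Hermiticity of `X` makes `⟨X⟩` real, so real parts multiply. -/
lemma expVal_kronecker (α : m → ℂ) (β : n → ℂ) {X : Matrix m m ℂ} (Y : Matrix n n ℂ)
    (hX : X.IsHermitian) :
    expVal (prodVec α β) (X ⊗ₖ Y) = expVal α X * expVal β Y := by
  have h : (star α ⬝ᵥ X.mulVec α).im = 0 := hX.im_star_dotProduct_mulVec_self α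
  rw [expVal, prodVec_dotProduct_kronecker, Complex.mul_re, h]
  simp [expVal]

lemma var_prodVec [DecidableEq m] [DecidableEq n] {α : m → ℂ} {β : n → ℂ}
    {X : Matrix m m ℂ} {Y : Matrix n n ℂ} (hX : X.IsHermitian)
    (hα : star α ⬝ᵥ α = 1) (hβ : star β ⬝ᵥ β = 1) :
    Var (prodVec α β) (X ⊗ₖ (1 : Matrix n n ℂ) + (1 : Matrix m m ℂ) ⊗ₖ Y) =
      Var α X + Var β Y := by
  have h1 : expVal α (1 : Matrix m m ℂ) = 1 := by simp [expVal, hα]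
  have h2 : expVal β (1 : Matrix n n ℂ) = 1 := by simp [expVal, hβ]
  have hXX : (X * X).IsHermitian := by
    rw [Matrix.IsHermitian, Matrix.conjTranspose_mul, hX.eq]
  have hsq : (X ⊗ₖ (1 : Matrix n n ℂ) + (1 : Matrix m m ℂ) ⊗ₖ Y) *
      (X ⊗ₖ (1 : Matrix n n ℂ) + (1 : Matrix m m ℂ) ⊗ₖ Y) =
      (X * X) ⊗ₖ (1 : Matrix n n ℂ) + X ⊗ₖ Y + X ⊗ₖ Y + (1 : Matrix m m ℂ) ⊗ₖ (Y * Y) := by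
    simp only [add_mul, mul_add, ← Matrix.mul_kronecker_mul, one_mul, mul_one]
    abel
  simp only [Var, hsq, expVal_add, expVal_kronecker α β _ hX, expVal_kronecker α β _ hXX,
    expVal_kronecker α β _ (Matrix.isHermitian_one (n := m) (α := ℂ)), h1, h2]
  ring

lemma exists_unit_factors {α : m → ℂ} {β : n → ℂ}
    (h : star (prodVec α β) ⬝ᵥ prodVec α β = 1) :
    ∃ (α' : m → ℂ) (β' : n → ℂ), star α' ⬝ᵥ α' = 1 ∧ star β' ⬝ᵥ β' = 1 ∧
      prodVec α' β' = prodVec α β := by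
  rw [prodVec_dotProduct_self] at h
  obtain ⟨a, ha0, ha⟩ : ∃ a : ℝ, 0 ≤ a ∧ star α ⬝ᵥ α = (a : ℂ) := by
    refine ⟨∑ i, Complex.normSq (α i), Finset.sum_nonneg fun i _ => Complex.normSq_nonneg _, ?_⟩
    simp [dotProduct, Complex.normSq_eq_conj_mul_self]
  have hane : a ≠ 0 := by
    rintro rfl
    simp [ha] at h
  -- `s = √a` is the norm of `α`; the rescaling moves it from `α` to `β`.
  obtain ⟨s, hs⟩ : ∃ s : ℝ, s * s = a := ⟨√a, Real.mul_self_sqrt ha0⟩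
  have hsne : (s : ℂ) ≠ 0 := by
    rintro h0
    apply hane
    rw [← hs, Complex.ofReal_eq_zero.mp h0, mul_zero]
  have hsc : (a : ℂ) = s * s := by rw [← hs]; push_cast; rfl
  refine ⟨(s : ℂ)⁻¹ • α, (s : ℂ) • β, ?_, ?_, ?_⟩
  · simp only [star_smul, smul_dotProduct, dotProduct_smul, ha, hsc, smul_eq_mul, star_inv₀,
      Complex.star_def, Complex.conj_ofReal]
    field_simp
  · simp only [star_smul, smul_dotProduct, dotProduct_smul, smul_eq_mul,
      Complex.star_def, Complex.conj_ofReal]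
    rw [← h, ha, hsc]
    ring
  · ext p
    simp only [prodVec, Pi.smul_apply, smul_eq_mul]
    field_simp

lemma sum_var_le_of_product [DecidableEq m] [DecidableEq n] {ι : Type*} [Fintype ι]
    {X : ι → Matrix m m ℂ} {Y : ι → Matrix n n ℂ} (hX : ∀ μ, (X μ).IsHermitian)
    {F G : ℝ} (hF : ∀ φ : m → ℂ, star φ ⬝ᵥ φ = 1 → ∑ μ, Var φ (X μ) ≤ F)
    (hG : ∀ φ : n → ℂ, star φ ⬝ᵥ φ = 1 → ∑ μ, Var φ (Y μ) ≤ G)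
    {α : m → ℂ} {β : n → ℂ} (h : star (prodVec α β) ⬝ᵥ prodVec α β = 1) :
    ∑ μ, Var (prodVec α β) (X μ ⊗ₖ (1 : Matrix n n ℂ) + (1 : Matrix m m ℂ) ⊗ₖ Y μ) ≤
      F + G := by
  obtain ⟨α', β', hα, hβ, he⟩ := exists_unit_factors h
  rw [← he]
  simp only [var_prodVec (hX _) hα hβ, Finset.sum_add_distrib]
  exact add_le_add (hF _ hα) (hG _ hβ)

lemma dotProduct_comp_equiv_self (e : m ≃ n) (φ : n → ℂ) :
    star (φ ∘ e) ⬝ᵥ (φ ∘ e) = star φ ⬝ᵥ φ :=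
  e.sum_comp fun i => star φ i * φ i

lemma var_submatrix (e : m ≃ n) (φ : n → ℂ) (M : Matrix n n ℂ) :
    Var (φ ∘ e) (M.submatrix e e) = Var φ M := by
  have h : ∀ N : Matrix n n ℂ, expVal (φ ∘ e) (N.submatrix e e) = expVal φ N := by
    intro N
    have h1 : (N.submatrix e e).mulVec (φ ∘ e) = N.mulVec φ ∘ e := by
      rw [Matrix.submatrix_mulVec_equiv]
      simp [Function.comp_assoc]
    rw [expVal, expVal, h1]
    exact congrArg Complex.re (e.sum_comp fun i => star φ i * N.mulVec φ i)
  rw [Var, Var, Matrix.submatrix_mul_equiv, h, h]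

/-- The reordering of tensor factors `a(bc) → b(ac)`. -/
def equivMid (a b c : Type*) : a × b × c ≃ b × a × c where
  toFun p := (p.2.1, p.1, p.2.2)
  invFun p := (p.2.1, p.1, p.2.2)
  left_inv _ := rfl
  right_inv _ := rfl

end Helpers

theorem biseparable_pure_fisher_bound_general (d₁ d₂ d₃ : ℕ)
    (hd₁ : 1 ≤ d₁) (hd₂ : 1 ≤ d₂) (hd₃ : 1 ≤ d₃)
    {ι : Type*} [Fintype ι]
    (A : ι → Matrix (Fin d₁) (Fin d₁) ℂ)
    (B : ι → Matrix (Fin d₂) (Fin d₂) ℂ)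
    (C : ι → Matrix (Fin d₃) (Fin d₃) ℂ)
    (hA : ∀ μ, (A μ).IsHermitian) (hB : ∀ μ, (B μ).IsHermitian)
    (hC : ∀ μ, (C μ).IsHermitian)
    (Fa Fb Fc Fab Fac Fbc : ℝ)
    (hFa : ∀ φ : Fin d₁ → ℂ, star φ ⬝ᵥ φ = 1 → ∑ μ, Var φ (A μ) ≤ Fa)
    (hFb : ∀ φ : Fin d₂ → ℂ, star φ ⬝ᵥ φ = 1 → ∑ μ, Var φ (B μ) ≤ Fb)
    (hFc : ∀ φ : Fin d₃ → ℂ, star φ ⬝ᵥ φ = 1 → ∑ μ, Var φ (C μ) ≤ Fc)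
    (hFab : ∀ φ : Fin d₁ × Fin d₂ → ℂ, star φ ⬝ᵥ φ = 1 →
      ∑ μ, Var φ (A μ ⊗ₖ (1 : Matrix (Fin d₂) (Fin d₂) ℂ) +
                  (1 : Matrix (Fin d₁) (Fin d₁) ℂ) ⊗ₖ B μ) ≤ Fab)
    (hFac : ∀ φ : Fin d₁ × Fin d₃ → ℂ, star φ ⬝ᵥ φ = 1 →
      ∑ μ, Var φ (A μ ⊗ₖ (1 : Matrix (Fin d₃) (Fin d₃) ℂ) +
                  (1 : Matrix (Fin d₁) (Fin d₁) ℂ) ⊗ₖ C μ) ≤ Fac)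
    (hFbc : ∀ φ : Fin d₂ × Fin d₃ → ℂ, star φ ⬝ᵥ φ = 1 →
      ∑ μ, Var φ (B μ ⊗ₖ (1 : Matrix (Fin d₃) (Fin d₃) ℂ) +
                  (1 : Matrix (Fin d₂) (Fin d₂) ℂ) ⊗ₖ C μ) ≤ Fbc)
    (ψ : Fin d₁ × Fin d₂ × Fin d₃ → ℂ) (hψ : star ψ ⬝ᵥ ψ = 1)
    (hsep : PureBiseparable ψ) :
    ∑ μ, Var ψ
        (A μ ⊗ₖ ((1 : Matrix (Fin d₂) (Fin d₂) ℂ) ⊗ₖ (1 : Matrix (Fin d₃) (Fin d₃) ℂ)) +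
         (1 : Matrix (Fin d₁) (Fin d₁) ℂ) ⊗ₖ (B μ ⊗ₖ (1 : Matrix (Fin d₃) (Fin d₃) ℂ)) +
         (1 : Matrix (Fin d₁) (Fin d₁) ℂ) ⊗ₖ ((1 : Matrix (Fin d₂) (Fin d₂) ℂ) ⊗ₖ C μ)) ≤
      max (max Fa Fb) Fc + max (max Fab Fac) Fbc := by
  have hF1a : Fa ≤ max (max Fa Fb) Fc := (le_max_left _ _).trans (le_max_left _ _)
  have hF1b : Fb ≤ max (max Fa Fb) Fc := (le_max_right _ _).trans (le_max_left _ _)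
  have hF1c : Fc ≤ max (max Fa Fb) Fc := le_max_right _ _
  have hF2ab : Fab ≤ max (max Fab Fac) Fbc := (le_max_left _ _).trans (le_max_left _ _)
  have hF2ac : Fac ≤ max (max Fab Fac) Fbc := (le_max_right _ _).trans (le_max_left _ _)
  have hF2bc : Fbc ≤ max (max Fab Fac) Fbc := le_max_right _ _
  rcases hsep with ⟨α, β, h⟩ | ⟨β, γ, h⟩ | ⟨α, γ, h⟩
  · obtain rfl : ψ = prodVec α β := funext h
    refine le_trans (le_of_eq ?_)
      ((sum_var_le_of_product hA hFa hFbc hψ).trans (add_le_add hF1a hF2bc))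
    refine Finset.sum_congr rfl fun μ _ => ?_
    rw [Matrix.one_kronecker_one, Matrix.kronecker_add, add_assoc]
  · obtain rfl : ψ = prodVec β γ ∘ equivMid (Fin d₁) (Fin d₂) (Fin d₃) := funext h
    rw [dotProduct_comp_equiv_self] at hψ
    refine le_trans (le_of_eq ?_)
      ((sum_var_le_of_product hB hFb hFac hψ).trans (add_le_add hF1b hF2ac))
    refine Finset.sum_congr rfl fun μ _ => ?_
    rw [← var_submatrix (equivMid (Fin d₁) (Fin d₂) (Fin d₃)), ← Matrix.one_kronecker_one]
    congr 1
    ext ⟨i, j, k⟩ ⟨i', j', k'⟩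
    simp only [Matrix.add_apply, kroneckerMap_apply, Matrix.submatrix_apply, equivMid,
      Equiv.coe_fn_mk]
    ring
  · obtain rfl : ψ = prodVec α γ ∘ (Equiv.prodAssoc (Fin d₁) (Fin d₂) (Fin d₃)).symm :=
      funext h
    rw [dotProduct_comp_equiv_self] at hψ
    have hAB : ∀ μ, (A μ ⊗ₖ (1 : Matrix (Fin d₂) (Fin d₂) ℂ) +
        (1 : Matrix (Fin d₁) (Fin d₁) ℂ) ⊗ₖ B μ).IsHermitian := fun μ => by
      simp [Matrix.IsHermitian, Matrix.conjTranspose_kronecker, (hA μ).eq, (hB μ).eq]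
    refine le_trans (le_of_eq ?_) ((sum_var_le_of_product hAB hFab hFc hψ).trans
      ((add_le_add hF2ab hF1c).trans_eq (add_comm _ _)))
    refine Finset.sum_congr rfl fun μ _ => ?_
    rw [← var_submatrix (Equiv.prodAssoc (Fin d₁) (Fin d₂) (Fin d₃)).symm,
      ← Matrix.one_kronecker_one]
    congr 1
    ext ⟨i, j, k⟩ ⟨i', j', k'⟩
    simp only [Matrix.add_apply, kroneckerMap_apply, Matrix.submatrix_apply,
      Equiv.prodAssoc_symm_apply]
    ring
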